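/- In the gluing setup, for every x, y ∈ V_d the shortest-path distance d̂(x,y) is given by: d̂(x,y) = f̂(x,y) if x,y ∈ V_f for some f ∈ {p} ∪ 𝔉; and d̂(x,y) = inf{ f̂(x,a) + p̂(a,b) + ĝ(b,y) : a ∈ V_f ∩ V_p, b ∈ V_g ∩ V_p } if x ∈ V_f and y ∈ V_g for distinct f, g ∈ {p} ∪ 𝔉. -/

import Mathlib

open scoped Classical

universe u

namespace GraphMetricPaper

variable {X : Type u}

/-- The vertex set `V = ⋃ E` of a graph given by an adjacency relation `E`. -/
def Vtx (E : X → X → Prop) : Set X := {x | ∃ y, E x y}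

/-- Two points are joined by a walk in the graph `E`. -/
def Joined (E : X → X → Prop) (x y : X) : Prop :=
  ∃ (n : ℕ) (c : ℕ → X), c 0 = x ∧ c n = y ∧ ∀ i, i < n → E (c i) (c (i + 1))

/-- The set of weights of walks from `x` to `y`. -/
def walkSums (E : X → X → Prop) (d : X → X → ℝ) (x y : X) : Set ℝ :=
  {s | ∃ (n : ℕ) (c : ℕ → X), c 0 = x ∧ c n = y ∧ (∀ i, i < n → E (c i) (c (i + 1))) ∧
    s = ∑ i ∈ Finset.range n, d (c i) (c (i + 1))}

/-- The shortest-path pseudometric `d̂` determined by a weight function `d` on a graph `E`. -/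
noncomputable def hatd (E : X → X → Prop) (d : X → X → ℝ) (x y : X) : ℝ :=
  sInf (walkSums E d x y)

/-- The function `ď` bounding the possible extensions of `d` from below:
`ď(x,y) = sup_{ab ∈ E} max {0, d(ab) - d̂(a,x) - d̂(y,b)}`. -/
noncomputable def checkd (E : X → X → Prop) (d : X → X → ℝ) (x y : X) : ℝ :=
  sSup ({0} ∪ {r | ∃ a b, E a b ∧ r = d a b - hatd E d a x - hatd E d y b})

/-- The pseudometric `d̈` on doubletons:
`d̈(xy,uv) = min {d̂(x,u) + d̂(y,v), d̂(x,v) + d̂(y,u)}`. -/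
noncomputable def ddot (E : X → X → Prop) (d : X → X → ℝ) (x y u v : X) : ℝ :=
  min (hatd E d x u + hatd E d y v) (hatd E d x v + hatd E d y u)

/-- `d` is a graph pseudometric with edge relation `E`:  `E` is a (symmetric, irreflexive)
connected graph, `d` is a nonnegative symmetric weight on the edges, and `d = d̂` on edges. -/
structure IsGraphPseudometric (E : X → X → Prop) (d : X → X → ℝ) : Prop where
  symm : ∀ ⦃a b⦄, E a b → E b a
  irrefl : ∀ a, ¬ E a a
  wt_symm : ∀ ⦃a b⦄, E a b → d a b = d b a
  nonneg : ∀ ⦃a b⦄, E a b → 0 ≤ d a b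
  connected : ∀ x ∈ Vtx E, ∀ y ∈ Vtx E, Joined E x y
  edge_eq : ∀ ⦃a b⦄, E a b → d a b = hatd E d a b

/-- A graph metric is a graph pseudometric with strictly positive weights. -/
def IsGraphMetric (E : X → X → Prop) (d : X → X → ℝ) : Prop :=
  IsGraphPseudometric E d ∧ ∀ ⦃a b⦄, E a b → 0 < d a b

/-- A floppy graph pseudometric: `ď(x,y) < d̂(x,y)` for every `xy ∈ [V]² \ E`. -/
def FloppyPseudometric (E : X → X → Prop) (d : X → X → ℝ) : Prop :=
  IsGraphPseudometric E d ∧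
    ∀ x ∈ Vtx E, ∀ y ∈ Vtx E, x ≠ y → ¬ E x y → checkd E d x y < hatd E d x y

/-- A floppy graph metric: `ď(x,y) < d̂(x,y)` for every `xy ∈ [V]² \ E`. -/
def FloppyMetric (E : X → X → Prop) (d : X → X → ℝ) : Prop :=
  IsGraphMetric E d ∧
    ∀ x ∈ Vtx E, ∀ y ∈ Vtx E, x ≠ y → ¬ E x y → checkd E d x y < hatd E d x y

/-- The edge relation of the one-step extension `E ∪ {xy}`. -/
def extEdge (E : X → X → Prop) (x y : X) : X → X → Prop :=
  fun a b => E a b ∨ (a = x ∧ b = y) ∨ (a = y ∧ b = x)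

/-- The weight function of the one-step extension `d ∪ {⟨xy, r⟩}`. -/
noncomputable def extWt (d : X → X → ℝ) (x y : X) (r : ℝ) : X → X → ℝ :=
  fun a b => if (a = x ∧ b = y) ∨ (a = y ∧ b = x) then r else d a b

/-- The set `[V]² \ E` of unordered pairs of distinct vertices that are not edges. -/
def nonEdgePairs (E : X → X → Prop) : Set (Sym2 X) :=
  {e | ∃ a b : X, e = s(a, b) ∧ a ≠ b ∧ a ∈ Vtx E ∧ b ∈ Vtx E ∧ ¬ E a b}

/-- A set of (unordered) weighted pairs, presented as a relation `R`, is a full metric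
on `V`: it is symmetric, its domain is exactly `[V]²`, it is single-valued, positive,
and satisfies the triangle inequality. -/
def IsFullMetricRel (V : Set X) (R : X → X → ℝ → Prop) : Prop :=
  (∀ a b r, R a b r → R b a r) ∧
  (∀ a b r, R a b r → a ∈ V ∧ b ∈ V ∧ a ≠ b) ∧
  (∀ a b, a ∈ V → b ∈ V → a ≠ b → ∃ r, R a b r) ∧
  (∀ a b r s, R a b r → R a b s → r = s) ∧
  (∀ a b r, R a b r → 0 < r) ∧
  (∀ a b c r s t, R a b r → R b c s → R a c t → t ≤ r + s)

/-- A weight function `D` on `[V]²` is a full metric on `V`. -/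
def IsFullMetricOn (V : Set X) (D : X → X → ℝ) : Prop :=
  (∀ a b, a ∈ V → b ∈ V → a ≠ b → D a b = D b a) ∧
  (∀ a b, a ∈ V → b ∈ V → a ≠ b → 0 < D a b) ∧
  (∀ a b c, a ∈ V → b ∈ V → c ∈ V → a ≠ b → b ≠ c → a ≠ c → D a c ≤ D a b + D b c)

/-- Player I has a winning strategy in the metric-extending game `Game_d(lam, Fam)`:
there are functions `S1, S2` choosing, for each inning `β < lam` and each sequence of
previous answers of player II, a legal doubleton in `[V]²` and a set from `Fam`, such that
for every play of player II respecting the strategy, the resulting relation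
`d ∪ {⟨x_α y_α, r_α⟩ : α < lam}` is a full metric on `V`. -/
def WinningStratI (V : Set X) (E : X → X → Prop) (d : X → X → ℝ)
    (lam : Ordinal.{u}) (Fam : Set (Set ℝ)) : Prop :=
  ∃ (S1 : ∀ β : Ordinal.{u}, β < lam → (∀ α : Ordinal.{u}, α < β → ℝ) → X × X)
    (S2 : ∀ β : Ordinal.{u}, β < lam → (∀ α : Ordinal.{u}, α < β → ℝ) → Set ℝ),
    (∀ β hβ s, S2 β hβ s ∈ Fam) ∧
    (∀ β hβ s, (S1 β hβ s).1 ∈ V ∧ (S1 β hβ s).2 ∈ V ∧ (S1 β hβ s).1 ≠ (S1 β hβ s).2) ∧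
    (∀ s : ∀ α : Ordinal.{u}, α < lam → ℝ,
      (∀ α (hα : α < lam), s α hα ∈ S2 α hα (fun γ hγ => s γ (hγ.trans hα))) →
      IsFullMetricRel V (fun a b r =>
        (E a b ∧ r = d a b) ∨
        ∃ α, ∃ hα : α < lam,
          ((a = (S1 α hα (fun γ hγ => s γ (hγ.trans hα))).1 ∧
            b = (S1 α hα (fun γ hγ => s γ (hγ.trans hα))).2) ∨
           (a = (S1 α hα (fun γ hγ => s γ (hγ.trans hα))).2 ∧
            b = (S1 α hα (fun γ hγ => s γ (hγ.trans hα))).1)) ∧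
          r = s α hα))

/-- Player II has a winning strategy in the metric-extending game `Game_d(lam, Fam)`:
there is a function `T` assigning to each inning `β < lam` and each sequence of moves of
player I (of length `β + 1`) an answer in the set component of the last move, such that
for every legal play of player I, the resulting relation is not a full metric on `V`. -/
def WinningStratII (V : Set X) (E : X → X → Prop) (d : X → X → ℝ)
    (lam : Ordinal.{u}) (Fam : Set (Set ℝ)) : Prop :=
  ∃ T : ∀ β : Ordinal.{u}, β < lam → (∀ α : Ordinal.{u}, α ≤ β → (X × X) × Set ℝ) → ℝ,
    (∀ β hβ p, (p β le_rfl).2 ∈ Fam → T β hβ p ∈ (p β le_rfl).2) ∧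
    (∀ p : ∀ α : Ordinal.{u}, α < lam → (X × X) × Set ℝ,
      (∀ α hα, (p α hα).1.1 ∈ V ∧ (p α hα).1.2 ∈ V ∧ (p α hα).1.1 ≠ (p α hα).1.2 ∧
        (p α hα).2 ∈ Fam) →
      ¬ IsFullMetricRel V (fun a b r =>
        (E a b ∧ r = d a b) ∨
        ∃ α, ∃ hα : α < lam,
          ((a = (p α hα).1.1 ∧ b = (p α hα).1.2) ∨
           (a = (p α hα).1.2 ∧ b = (p α hα).1.1)) ∧
          r = T α hα (fun γ hγ => p γ (lt_of_le_of_lt hγ hα))))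

/-- The edge relation of the glued graph `E_d = E_p ∪ ⋃_{f ∈ F} E_f`. -/
def gluedEdge (Ep : X → X → Prop) (F : Set ((X → X → Prop) × (X → X → ℝ))) :
    X → X → Prop :=
  fun a b => Ep a b ∨ ∃ f ∈ F, f.1 a b

/-- `Λ(v; B) = inf {d̂(a,v) + d̂(v,b) - d̂(a,b) : a, b ∈ B}`. -/
noncomputable def Lam (E : X → X → Prop) (d : X → X → ℝ) (v : X) (B : Set X) : ℝ :=
  sInf {r | ∃ a ∈ B, ∃ b ∈ B, r = hatd E d a v + hatd E d v b - hatd E d a b}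

/-- The gluing setup: a graph pseudometric `p = (Ep, wp)` and a family `F` of graph
pseudometrics such that each member meets `V_p`, agrees with `p̂` on the intersection of
the vertex sets, and distinct members only meet inside `V_p`; `wd` is the glued weight
function `d = p ∪ ⋃ F` on `E_d = E_p ∪ ⋃_{f ∈ F} E_f`. -/
structure GluingSetup (Ep : X → X → Prop) (wp : X → X → ℝ)
    (F : Set ((X → X → Prop) × (X → X → ℝ))) (wd : X → X → ℝ) : Prop where
  hp : IsGraphPseudometric Ep wp
  hF : ∀ f ∈ F, IsGraphPseudometric f.1 f.2
  meet : ∀ f ∈ F, (Vtx f.1 ∩ Vtx Ep).Nonempty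
  agree : ∀ f ∈ F, ∀ x ∈ Vtx f.1 ∩ Vtx Ep, ∀ y ∈ Vtx f.1 ∩ Vtx Ep, x ≠ y →
    hatd f.1 f.2 x y = hatd Ep wp x y
  inter_sub : ∀ f ∈ F, ∀ g ∈ F, f ≠ g → Vtx f.1 ∩ Vtx g.1 ⊆ Vtx Ep
  wd_p : ∀ ⦃a b⦄, Ep a b → wd a b = wp a b
  wd_F : ∀ f ∈ F, ∀ ⦃a b⦄, f.1 a b → wd a b = f.2 a b


/-!
Each edge of the glued graph lies in a single piece, and a walk can pass from one piece to another
only at a vertex of `p`. Reading a walk edge by edge, one keeps track of a route from its start to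
its current vertex which is no longer than the walk and either stays inside the first piece, or runs
inside the first piece to a vertex `a` of `p`, through `p` to a vertex `b`, and inside the current
piece from there on. When the walk changes pieces at `z ∈ V_p`, the route can be led through `p` as
far as `z`, because the stretch from `b` to `z` inside the current piece has length `p̂(b,z)`.
-/

section Walks

variable {E E' : X → X → Prop} {d d' : X → X → ℝ} {x y z : X} {s t : ℝ}

theorem zero_mem_walkSums : 0 ∈ walkSums E d x x :=
  ⟨0, fun _ => x, rfl, rfl, by simp, by simp⟩

theorem walkSums_snoc (hs : s ∈ walkSums E d x y) (hyz : E y z) :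
    s + d y z ∈ walkSums E d x z := by
  obtain ⟨n, c, rfl, rfl, hc, rfl⟩ := hs
  have update_of_le {i : ℕ} (hi : i ≤ n) : Function.update c (n + 1) z i = c i :=
    Function.update_of_ne (by omega) _ _
  refine ⟨n + 1, Function.update c (n + 1) z, update_of_le n.zero_le, Function.update_self .., ?_,
    ?_⟩
  · intro i hi
    rcases (Nat.lt_succ_iff.mp hi).lt_or_eq with hin | rfl
    · rw [update_of_le hin.le, update_of_le hin]
      exact hc i hin
    · rwa [update_of_le le_rfl, Function.update_self]
  · rw [Finset.sum_range_succ, update_of_le le_rfl, Function.update_self]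
    refine congrArg (· + d (c n) z) (Finset.sum_congr rfl fun i hi => ?_)
    rw [Finset.mem_range] at hi
    rw [update_of_le hi.le, update_of_le hi]

@[elab_as_elim]
theorem walkSums_induction {motive : ∀ y s, s ∈ walkSums E d x y → Prop}
    (refl : motive x 0 zero_mem_walkSums)
    (snoc : ∀ y z s (hs : s ∈ walkSums E d x y) (hyz : E y z), motive y s hs →
      motive z (s + d y z) (walkSums_snoc hs hyz))
    (hs : s ∈ walkSums E d x y) : motive y s hs := by
  obtain ⟨n, c, rfl, rfl, hc, rfl⟩ := hs
  induction n with
  | zero => exact refl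
  | succ n ih =>
    simp only [Finset.sum_range_succ]
    exact snoc _ _ _ _ (hc n n.lt_succ_self) (ih fun i hi => hc i (hi.trans n.lt_succ_self))

theorem walkSums_add (hs : s ∈ walkSums E d x y) (ht : t ∈ walkSums E d y z) :
    s + t ∈ walkSums E d x z := by
  induction ht using walkSums_induction with
  | refl => rwa [add_zero]
  | snoc z w t _ hzw ih =>
    rw [← add_assoc]
    exact walkSums_snoc ih hzw

theorem walkSums_mono (hE : ∀ ⦃a b⦄, E a b → E' a b) (hd : ∀ ⦃a b⦄, E a b → d' a b = d a b) :
    walkSums E d x y ⊆ walkSums E' d' x y := by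
  rintro _ ⟨n, c, hx, hy, hc, rfl⟩
  exact ⟨n, c, hx, hy, fun i hi => hE (hc i hi),
    Finset.sum_congr rfl fun i hi => (hd (hc i (Finset.mem_range.mp hi))).symm⟩

theorem walkSums_nonempty_iff : (walkSums E d x y).Nonempty ↔ Joined E x y :=
  ⟨fun ⟨_, n, c, hx, hy, hc, _⟩ => ⟨n, c, hx, hy, hc⟩,
    fun ⟨n, c, hx, hy, hc⟩ => ⟨_, n, c, hx, hy, hc, rfl⟩⟩

theorem Joined.mono (hE : ∀ ⦃a b⦄, E a b → E' a b) : Joined E x y → Joined E' x y :=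
  fun ⟨n, c, hx, hy, hc⟩ => ⟨n, c, hx, hy, fun i hi => hE (hc i hi)⟩

theorem Joined.trans (hxy : Joined E x y) (hyz : Joined E y z) : Joined E x z := by
  obtain ⟨_, hs⟩ := walkSums_nonempty_iff (d := 0).mpr hxy
  obtain ⟨_, ht⟩ := walkSums_nonempty_iff.mpr hyz
  exact walkSums_nonempty_iff.mp ⟨_, walkSums_add hs ht⟩

end Walks

section NonnegWeight

variable {E E' : X → X → Prop} {d d' : X → X → ℝ} {x y z : X} {s : ℝ}

theorem nonneg_of_mem_walkSums (hd : ∀ ⦃a b⦄, E a b → 0 ≤ d a b) (hs : s ∈ walkSums E d x y) :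
    0 ≤ s := by
  induction hs using walkSums_induction with
  | refl => exact le_rfl
  | snoc _ _ _ _ hyz ih => exact add_nonneg ih (hd hyz)

theorem hatd_nonneg (hd : ∀ ⦃a b⦄, E a b → 0 ≤ d a b) : 0 ≤ hatd E d x y :=
  Real.sInf_nonneg fun _ => nonneg_of_mem_walkSums hd

theorem bddBelow_walkSums (hd : ∀ ⦃a b⦄, E a b → 0 ≤ d a b) : BddBelow (walkSums E d x y) :=
  ⟨0, fun _ => nonneg_of_mem_walkSums hd⟩

theorem hatd_self (hd : ∀ ⦃a b⦄, E a b → 0 ≤ d a b) : hatd E d x x = 0 :=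
  (csInf_le (bddBelow_walkSums hd) zero_mem_walkSums).antisymm (hatd_nonneg hd)

theorem hatd_le_of_edge (hd : ∀ ⦃a b⦄, E a b → 0 ≤ d a b) (hxy : E x y) :
    hatd E d x y ≤ d x y :=
  csInf_le (bddBelow_walkSums hd) (by simpa using walkSums_snoc zero_mem_walkSums hxy)

open scoped Pointwise in
theorem hatd_triangle (hd : ∀ ⦃a b⦄, E a b → 0 ≤ d a b) (hxy : Joined E x y)
    (hyz : Joined E y z) : hatd E d x z ≤ hatd E d x y + hatd E d y z := by
  have hxy := walkSums_nonempty_iff (d := d).mpr hxy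
  have hyz := walkSums_nonempty_iff (d := d).mpr hyz
  calc hatd E d x z
    _ ≤ sInf (walkSums E d x y + walkSums E d y z) :=
      csInf_le_csInf (bddBelow_walkSums hd) (hxy.add hyz)
        (Set.add_subset_iff.mpr fun _ hs _ ht => walkSums_add hs ht)
    _ = hatd E d x y + hatd E d y z :=
      csInf_add hxy (bddBelow_walkSums hd) hyz (bddBelow_walkSums hd)

theorem hatd_anti (hE : ∀ ⦃a b⦄, E a b → E' a b) (hdd' : ∀ ⦃a b⦄, E a b → d' a b = d a b)
    (hd' : ∀ ⦃a b⦄, E' a b → 0 ≤ d' a b) (hxy : Joined E x y) :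
    hatd E' d' x y ≤ hatd E d x y :=
  csInf_le_csInf (bddBelow_walkSums hd') (walkSums_nonempty_iff.mpr hxy) (walkSums_mono hE hdd')

end NonnegWeight

/-- `E` is a strongly connected directed graph and `d` a nonnegative weight on it. Since `Vtx E`
consists of the tails of edges, `head_mem` is what makes every endpoint of an edge a vertex. -/
structure IsStronglyConnectedWeight (E : X → X → Prop) (d : X → X → ℝ) : Prop where
  head_mem : ∀ ⦃a b⦄, E a b → b ∈ Vtx E
  nonneg : ∀ ⦃a b⦄, E a b → 0 ≤ d a b
  connected : ∀ x ∈ Vtx E, ∀ y ∈ Vtx E, Joined E x y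

theorem IsStronglyConnectedWeight.hatd_triangle {E : X → X → Prop} {d : X → X → ℝ} {x y z : X}
    (h : IsStronglyConnectedWeight E d) (hx : x ∈ Vtx E) (hy : y ∈ Vtx E) (hz : z ∈ Vtx E) :
    hatd E d x z ≤ hatd E d x y + hatd E d y z :=
  GraphMetricPaper.hatd_triangle h.nonneg (h.connected x hx y hy) (h.connected y hy z hz)

theorem IsGraphPseudometric.isStronglyConnectedWeight {E : X → X → Prop} {d : X → X → ℝ}
    (h : IsGraphPseudometric E d) : IsStronglyConnectedWeight E d where
  head_mem a _ hab := ⟨a, h.symm hab⟩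
  nonneg := h.nonneg
  connected := h.connected

/-- `(E, d)` is the union of a family `G` of weighted strongly connected directed graphs, the
pieces, glued along the piece `p`. This is the directed analogue of `GluingSetup`, in which `G`
stands for `{p} ∪ 𝔉`. -/
structure IsDirectedGluing (p : (X → X → Prop) × (X → X → ℝ))
    (G : Set ((X → X → Prop) × (X → X → ℝ))) (E : X → X → Prop) (d : X → X → ℝ) : Prop where
  base_mem : p ∈ G
  piece : ∀ f ∈ G, IsStronglyConnectedWeight f.1 f.2
  meet : ∀ f ∈ G, (Vtx f.1).Nonempty → (Vtx f.1 ∩ Vtx p.1).Nonempty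
  agree : ∀ f ∈ G, ∀ a ∈ Vtx f.1 ∩ Vtx p.1, ∀ b ∈ Vtx f.1 ∩ Vtx p.1,
    hatd f.1 f.2 a b = hatd p.1 p.2 a b
  inter_subset : ∀ f ∈ G, ∀ g ∈ G, f ≠ g → Vtx f.1 ∩ Vtx g.1 ⊆ Vtx p.1
  edge_iff : ∀ a b, E a b ↔ ∃ f ∈ G, f.1 a b
  weight_eq : ∀ f ∈ G, ∀ ⦃a b⦄, f.1 a b → d a b = f.2 a b

/-- Lengths of the routes from `x` to `y` which consist of shortest paths inside `f` to a common
vertex of `f` and `p`, inside `p` to a common vertex of `p` and `g`, and inside `g` to `y`. -/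
def routeSums (p f g : (X → X → Prop) × (X → X → ℝ)) (x y : X) : Set ℝ :=
  {t | ∃ a ∈ Vtx f.1 ∩ Vtx p.1, ∃ b ∈ Vtx g.1 ∩ Vtx p.1,
    t = hatd f.1 f.2 x a + hatd p.1 p.2 a b + hatd g.1 g.2 b y}

/-- There is a route of length at most `s` from the vertex `x` of `f` to the vertex `y` of `g`: the
one inside `f` if `f = g`, or one through `p`. This is the invariant kept along a walk. -/
def HasRoute (p f g : (X → X → Prop) × (X → X → ℝ)) (x y : X) (s : ℝ) : Prop :=
  (f = g ∧ hatd f.1 f.2 x y ≤ s) ∨ ∃ t ∈ routeSums p f g x y, t ≤ s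

theorem HasRoute.snoc {p f g : (X → X → Prop) × (X → X → ℝ)} {x y z : X} {s : ℝ}
    (h : HasRoute p f g x y s) (hg : IsStronglyConnectedWeight g.1 g.2) (hx : x ∈ Vtx f.1)
    (hyz : g.1 y z) : HasRoute p f g x z (s + g.2 y z) := by
  have hy : y ∈ Vtx g.1 := ⟨z, hyz⟩
  have hz : z ∈ Vtx g.1 := hg.head_mem hyz
  have hedge : hatd g.1 g.2 y z ≤ g.2 y z := hatd_le_of_edge hg.nonneg hyz
  rcases h with ⟨rfl, hle⟩ | ⟨_, ⟨a, ha, b, hb, rfl⟩, hle⟩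
  · exact .inl ⟨rfl, by linarith [hg.hatd_triangle hx hy hz]⟩
  · exact .inr ⟨_, ⟨a, ha, b, hb, rfl⟩, by linarith [hg.hatd_triangle hb.1 hy hz]⟩

namespace IsDirectedGluing

variable {p f g h : (X → X → Prop) × (X → X → ℝ)} {G : Set ((X → X → Prop) × (X → X → ℝ))}
  {E : X → X → Prop} {d : X → X → ℝ} {x y z : X} {s t : ℝ}

theorem edge_of_mem (hG : IsDirectedGluing p G E d) (hf : f ∈ G) ⦃a b : X⦄ (hab : f.1 a b) :
    E a b :=
  (hG.edge_iff a b).mpr ⟨f, hf, hab⟩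

theorem vtx_subset (hG : IsDirectedGluing p G E d) (hf : f ∈ G) : Vtx f.1 ⊆ Vtx E :=
  fun _ ⟨b, hab⟩ => ⟨b, hG.edge_of_mem hf hab⟩

theorem exists_mem_vtx (hG : IsDirectedGluing p G E d) (hx : x ∈ Vtx E) :
    ∃ f ∈ G, x ∈ Vtx f.1 := by
  obtain ⟨y, hxy⟩ := hx
  obtain ⟨f, hf, hxy⟩ := (hG.edge_iff x y).mp hxy
  exact ⟨f, hf, y, hxy⟩

theorem joined_of_mem (hG : IsDirectedGluing p G E d) (hf : f ∈ G) (hx : x ∈ Vtx f.1)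
    (hy : y ∈ Vtx f.1) : Joined E x y :=
  ((hG.piece f hf).connected x hx y hy).mono (hG.edge_of_mem hf)

theorem isStronglyConnectedWeight (hG : IsDirectedGluing p G E d) :
    IsStronglyConnectedWeight E d where
  head_mem a b hab := by
    obtain ⟨f, hf, hab⟩ := (hG.edge_iff a b).mp hab
    exact hG.vtx_subset hf ((hG.piece f hf).head_mem hab)
  nonneg a b hab := by
    obtain ⟨f, hf, hab⟩ := (hG.edge_iff a b).mp hab
    rw [hG.weight_eq f hf hab]
    exact (hG.piece f hf).nonneg hab
  connected x hx y hy := by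
    obtain ⟨f, hf, hx⟩ := hG.exists_mem_vtx hx
    obtain ⟨g, hg, hy⟩ := hG.exists_mem_vtx hy
    obtain ⟨a, haf, hap⟩ := hG.meet f hf ⟨x, hx⟩
    obtain ⟨b, hbg, hbp⟩ := hG.meet g hg ⟨y, hy⟩
    exact (hG.joined_of_mem hf hx haf).trans <|
      (hG.joined_of_mem hG.base_mem hap hbp).trans (hG.joined_of_mem hg hbg hy)

theorem hatd_le_hatd_piece (hG : IsDirectedGluing p G E d) (hf : f ∈ G) (hx : x ∈ Vtx f.1)
    (hy : y ∈ Vtx f.1) : hatd E d x y ≤ hatd f.1 f.2 x y :=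
  hatd_anti (hG.edge_of_mem hf) (hG.weight_eq f hf) hG.isStronglyConnectedWeight.nonneg
    ((hG.piece f hf).connected x hx y hy)

theorem hatd_le_of_mem_routeSums (hG : IsDirectedGluing p G E d) (hf : f ∈ G) (hg : g ∈ G)
    (hx : x ∈ Vtx f.1) (hy : y ∈ Vtx g.1) (ht : t ∈ routeSums p f g x y) : hatd E d x y ≤ t := by
  obtain ⟨a, ha, b, hb, rfl⟩ := ht
  have hxE := hG.vtx_subset hf hx
  have haE := hG.vtx_subset hf ha.1
  have hbE := hG.vtx_subset hg hb.1
  have hyE := hG.vtx_subset hg hy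
  calc hatd E d x y
    _ ≤ hatd E d x b + hatd E d b y := hG.isStronglyConnectedWeight.hatd_triangle hxE hbE hyE
    _ ≤ hatd E d x a + hatd E d a b + hatd E d b y := by
      gcongr; exact hG.isStronglyConnectedWeight.hatd_triangle hxE haE hbE
    _ ≤ hatd f.1 f.2 x a + hatd p.1 p.2 a b + hatd g.1 g.2 b y := by
      gcongr
      exacts [hG.hatd_le_hatd_piece hf hx ha.1, hG.hatd_le_hatd_piece hG.base_mem ha.2 hb.2,
        hG.hatd_le_hatd_piece hg hb.1 hy]

theorem hatd_piece_le_of_mem_routeSums (hG : IsDirectedGluing p G E d) (hf : f ∈ G)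
    (hx : x ∈ Vtx f.1) (hy : y ∈ Vtx f.1) (ht : t ∈ routeSums p f f x y) :
    hatd f.1 f.2 x y ≤ t := by
  obtain ⟨a, ha, b, hb, rfl⟩ := ht
  rw [← hG.agree f hf a ha b hb]
  linarith [(hG.piece f hf).hatd_triangle hx ha.1 hb.1, (hG.piece f hf).hatd_triangle hx hb.1 hy]

theorem bddBelow_routeSums (hG : IsDirectedGluing p G E d) (hf : f ∈ G) (hg : g ∈ G)
    (hx : x ∈ Vtx f.1) (hy : y ∈ Vtx g.1) : BddBelow (routeSums p f g x y) :=
  ⟨hatd E d x y, fun _ => hG.hatd_le_of_mem_routeSums hf hg hx hy⟩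

theorem routeSums_nonempty (hG : IsDirectedGluing p G E d) (hf : f ∈ G) (hg : g ∈ G)
    (hx : x ∈ Vtx f.1) (hy : y ∈ Vtx g.1) : (routeSums p f g x y).Nonempty := by
  obtain ⟨a, ha⟩ := hG.meet f hf ⟨x, hx⟩
  obtain ⟨b, hb⟩ := hG.meet g hg ⟨y, hy⟩
  exact ⟨_, a, ha, b, hb, rfl⟩

theorem hasRoute_change_piece (hG : IsDirectedGluing p G E d) (hg : g ∈ G) (hh : h ∈ G)
    (hzg : z ∈ Vtx g.1) (hzh : z ∈ Vtx h.1) (hr : HasRoute p f g x z s) :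
    HasRoute p f h x z s := by
  rcases eq_or_ne g h with rfl | hgh
  · exact hr
  have hzp : z ∈ Vtx p.1 := hG.inter_subset g hg h hh hgh ⟨hzg, hzh⟩
  have hhz : hatd h.1 h.2 z z = 0 := hatd_self (hG.piece h hh).nonneg
  rcases hr with ⟨rfl, hle⟩ | ⟨_, ⟨a, ha, b, hb, rfl⟩, hle⟩
  · have hpz : hatd p.1 p.2 z z = 0 := hatd_self (hG.piece p hG.base_mem).nonneg
    exact .inr ⟨_, ⟨z, ⟨hzg, hzp⟩, z, ⟨hzh, hzp⟩, rfl⟩, by linarith⟩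
  · have hbz : hatd g.1 g.2 b z = hatd p.1 p.2 b z := hG.agree g hg b hb z ⟨hzg, hzp⟩
    have htri := (hG.piece p hG.base_mem).hatd_triangle ha.2 hb.2 hzp
    exact .inr ⟨_, ⟨a, ha, z, ⟨hzh, hzp⟩, rfl⟩, by linarith⟩

theorem hasRoute_of_mem_walkSums (hG : IsDirectedGluing p G E d) (hf : f ∈ G) (hg : g ∈ G)
    (hx : x ∈ Vtx f.1) (hy : y ∈ Vtx g.1) (hs : s ∈ walkSums E d x y) :
    HasRoute p f g x y s := by
  induction hs using walkSums_induction generalizing g with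
  | refl =>
    have hxx : HasRoute p f f x x 0 := .inl ⟨rfl, (hatd_self (hG.piece f hf).nonneg).le⟩
    exact hG.hasRoute_change_piece hf hg hx hy hxx
  | snoc y z s _ hyz ih =>
    obtain ⟨h, hh, hyz⟩ := (hG.edge_iff y z).mp hyz
    rw [hG.weight_eq h hh hyz]
    have hxz := (ih hh ⟨z, hyz⟩).snoc (hG.piece h hh) hx hyz
    exact hG.hasRoute_change_piece hh hg ((hG.piece h hh).head_mem hyz) hy hxz

theorem hatd_eq_hatd_piece (hG : IsDirectedGluing p G E d) (hf : f ∈ G) (hx : x ∈ Vtx f.1)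
    (hy : y ∈ Vtx f.1) : hatd E d x y = hatd f.1 f.2 x y := by
  refine (hG.hatd_le_hatd_piece hf hx hy).antisymm <|
    le_csInf (walkSums_nonempty_iff.mpr (hG.joined_of_mem hf hx hy)) fun s hs => ?_
  rcases hG.hasRoute_of_mem_walkSums hf hf hx hy hs with ⟨-, hle⟩ | ⟨t, ht, hle⟩
  · exact hle
  · exact (hG.hatd_piece_le_of_mem_routeSums hf hx hy ht).trans hle

theorem hatd_eq_sInf_routeSums (hG : IsDirectedGluing p G E d) (hf : f ∈ G) (hg : g ∈ G)
    (hfg : f ≠ g) (hx : x ∈ Vtx f.1) (hy : y ∈ Vtx g.1) :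
    hatd E d x y = sInf (routeSums p f g x y) := by
  have hxy : Joined E x y := hG.isStronglyConnectedWeight.connected x (hG.vtx_subset hf hx) y
    (hG.vtx_subset hg hy)
  apply le_antisymm
  · exact le_csInf (hG.routeSums_nonempty hf hg hx hy) fun _ =>
      hG.hatd_le_of_mem_routeSums hf hg hx hy
  · refine le_csInf (walkSums_nonempty_iff.mpr hxy) fun s hs => ?_
    obtain ⟨t, ht, hle⟩ : ∃ t ∈ routeSums p f g x y, t ≤ s :=
      (hG.hasRoute_of_mem_walkSums hf hg hx hy hs).resolve_left fun h => hfg h.1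
    exact (csInf_le (hG.bddBelow_routeSums hf hg hx hy) ht).trans hle

end IsDirectedGluing

theorem GluingSetup.isDirectedGluing {Ep : X → X → Prop} {wp : X → X → ℝ}
    {F : Set ((X → X → Prop) × (X → X → ℝ))} {wd : X → X → ℝ} (hs : GluingSetup Ep wp F wd) :
    IsDirectedGluing (Ep, wp) (insert (Ep, wp) F) (gluedEdge Ep F) wd where
  base_mem := Set.mem_insert _ _
  piece := Set.forall_mem_insert.mpr
    ⟨hs.hp.isStronglyConnectedWeight, fun f hf => (hs.hF f hf).isStronglyConnectedWeight⟩
  meet := Set.forall_mem_insert.mpr ⟨fun hV => by rwa [Set.inter_self], fun f hf _ => hs.meet f hf⟩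
  agree := by
    refine Set.forall_mem_insert.mpr ⟨fun _ _ _ _ => rfl, fun f hf a ha b hb => ?_⟩
    rcases eq_or_ne a b with rfl | hab
    · rw [hatd_self (hs.hF f hf).nonneg, hatd_self hs.hp.nonneg]
    · exact hs.agree f hf a ha b hb hab
  inter_subset := by
    rintro f (rfl | hf) g (rfl | hg) hfg
    exacts [Set.inter_subset_left, Set.inter_subset_left, Set.inter_subset_right,
      hs.inter_sub f hf g hg hfg]
  edge_iff _ _ := by simp only [gluedEdge, Set.exists_mem_insert]
  weight_eq := Set.forall_mem_insert.mpr ⟨hs.wd_p, hs.wd_F⟩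

theorem gluing_hatd_formula_general {p : (X → X → Prop) × (X → X → ℝ)}
    {G : Set ((X → X → Prop) × (X → X → ℝ))} {E : X → X → Prop} {d : X → X → ℝ}
    (hG : IsDirectedGluing p G E d) :
    (∀ f ∈ G, ∀ x ∈ Vtx f.1, ∀ y ∈ Vtx f.1, hatd E d x y = hatd f.1 f.2 x y) ∧
    (∀ f ∈ G, ∀ g ∈ G, f ≠ g → ∀ x ∈ Vtx f.1, ∀ y ∈ Vtx g.1,
      hatd E d x y = sInf (routeSums p f g x y)) :=
  ⟨fun _ hf _ hx _ hy => hG.hatd_eq_hatd_piece hf hx hy,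
    fun _ hf _ hg hfg _ hx _ hy => hG.hatd_eq_sInf_routeSums hf hg hfg hx hy⟩

/-- In the gluing setup, the shortest-path pseudometric of
`d = p ∪ ⋃𝔉` is computed by: `d̂(x,y) = f̂(x,y)` whenever `x, y ∈ V_f` for some
`f ∈ {p} ∪ 𝔉`, and `d̂(x,y) = inf {f̂(x,a) + p̂(a,b) + ĝ(b,y) : a ∈ V_f ∩ V_p,
b ∈ V_g ∩ V_p}` whenever `x ∈ V_f`, `y ∈ V_g` for distinct `f, g ∈ {p} ∪ 𝔉`. -/
theorem gluing_hatd_formula (Ep : X → X → Prop) (wp : X → X → ℝ)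
    (F : Set ((X → X → Prop) × (X → X → ℝ))) (wd : X → X → ℝ)
    (hs : GluingSetup Ep wp F wd) :
    (∀ f ∈ insert (Ep, wp) F, ∀ x ∈ Vtx f.1, ∀ y ∈ Vtx f.1,
      hatd (gluedEdge Ep F) wd x y = hatd f.1 f.2 x y) ∧
    (∀ f ∈ insert (Ep, wp) F, ∀ g ∈ insert (Ep, wp) F, f ≠ g →
      ∀ x ∈ Vtx f.1, ∀ y ∈ Vtx g.1,
      hatd (gluedEdge Ep F) wd x y =
        sInf {t : ℝ | ∃ a ∈ Vtx f.1 ∩ Vtx Ep, ∃ b ∈ Vtx g.1 ∩ Vtx Ep,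
          t = hatd f.1 f.2 x a + hatd Ep wp a b + hatd g.1 g.2 b y}) :=
  gluing_hatd_formula_general hs.isDirectedGluing

end GraphMetricPaper
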